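/- arXiv:2312.01894 — 6 statements merged into one kernel-verified Lean document; each statement's English description precedes it below -/
import Mathlib

section
/- Let (T, ρ) be a continuum tree, let x, y ∈ T be distinct with ℓ = ρ(x,y), and let δ, ε > 0 satisfy δ ≤ ℓ, ε ≤ ℓ and δ + ε > ℓ. Set r = (δ + ε − ℓ)/2 and let v be the unique point of [[x,y]] with ρ(x,v) = (ℓ − ε + δ)/2. Then B_δ(x) ∩ B_ε(y) = B_r(v). -/
/-- A continuum tree: a compact metric space in which, for all `x y`, there is a
unique isometric parametrisation `[0, dist x y] → T` from `x` to `y`, and the image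
of every injective continuous path from `x` to `y` equals the image of this geodesic. -/
structure ContinuumTree (T : Type*) [MetricSpace T] [CompactSpace T] where
  geodesic : T → T → ℝ → T
  geodesic_isometry : ∀ x y : T, ∀ s ∈ Set.Icc (0 : ℝ) (dist x y),
    ∀ t ∈ Set.Icc (0 : ℝ) (dist x y),
      dist (geodesic x y s) (geodesic x y t) = |s - t|
  geodesic_source : ∀ x y : T, geodesic x y 0 = x
  geodesic_target : ∀ x y : T, geodesic x y (dist x y) = y
  geodesic_unique : ∀ x y : T, ∀ γ : ℝ → T,
    (∀ s ∈ Set.Icc (0 : ℝ) (dist x y), ∀ t ∈ Set.Icc (0 : ℝ) (dist x y),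
      dist (γ s) (γ t) = |s - t|) →
    γ 0 = x → γ (dist x y) = y →
    Set.EqOn γ (geodesic x y) (Set.Icc 0 (dist x y))
  path_image : ∀ x y : T, ∀ γ : Path x y, Function.Injective ⇑γ →
    Set.range ⇑γ = geodesic x y '' Set.Icc 0 (dist x y)

/-- The geodesic segment `[[x,y]]`: the image of the unique geodesic from `x` to `y`. -/
def ContinuumTree.seg {T : Type*} [MetricSpace T] [CompactSpace T]
    (ct : ContinuumTree T) (x y : T) : Set T :=
  ct.geodesic x y '' Set.Icc 0 (dist x y)

/-!
For every `z`, the two geodesics from `x` to `z` and from `z` to `y`, cut at the first point where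
the former meets the latter, join to an injective path from `x` to `y`. Hence
`[[x,y]] ⊆ [[x,z]] ∪ [[z,y]]`, so `v` lies on a geodesic from `z` to `x` or to `y`. Therefore
`dist z v = dist z x - dist x v` or `dist z v = dist z y - dist v y`, and `dist x v = δ - r`,
`dist v y = ε - r` turn `z ∈ B_δ(x) ∩ B_ε(y)` into `dist z v < r`. The other inclusion is the
triangle inequality.
-/

open Function Metric Set

section InjectivePaths

variable {X : Type*} [TopologicalSpace X] {a b x y z : X}

theorem injective_path_subpath {γ : Path a b} (hγ : Injective γ) {s t : unitInterval}
    (hst : s ≠ t) : Injective (γ.subpath s t) := by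
  refine hγ.comp fun u w huw => ?_
  have hcomb : (t - s : ℝ) * u = (t - s) * w := by
    have := congrArg Subtype.val huw
    simp only [Icc.coe_convexComb] at this
    linarith
  exact Subtype.ext (mul_left_cancel₀ (sub_ne_zero.mpr (Subtype.coe_ne_coe.mpr hst.symm)) hcomb)

theorem exists_injective_path_range_subset {γ : Path a b} (hγ : Injective γ)
    (hx : x ∈ range γ) (hy : y ∈ range γ) (hxy : x ≠ y) :
    ∃ η : Path x y, Injective η ∧ range η ⊆ range γ := by
  obtain ⟨s, rfl⟩ := hx
  obtain ⟨t, rfl⟩ := hy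
  refine ⟨γ.subpath s t, injective_path_subpath hγ (ne_of_apply_ne γ hxy), ?_⟩
  exact γ.range_subpath s t ▸ image_subset_range _ _

theorem injective_path_trans {α : Path x z} {β : Path z y} (hα : Injective α) (hβ : Injective β)
    (hαβ : range α ∩ range β ⊆ {z}) : Injective (α.trans β) := by
  have eq_ends {s t : unitInterval} (h : α s = β t) : s = 1 ∧ t = 0 := by
    have hz : α s = z := hαβ ⟨mem_range_self s, h ▸ mem_range_self t⟩
    exact ⟨hα (hz.trans α.target.symm), hβ (h.symm.trans hz |>.trans β.source.symm)⟩
  intro s t hst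
  rw [Path.trans_apply, Path.trans_apply] at hst
  ext
  split_ifs at hst with hs ht ht
  · linarith [congrArg Subtype.val (hα hst)]
  · have := congrArg Subtype.val (eq_ends hst).2
    simp only [Icc.coe_zero] at this
    linarith
  · have := congrArg Subtype.val (eq_ends hst.symm).2
    simp only [Icc.coe_zero] at this
    linarith
  · linarith [congrArg Subtype.val (hβ hst)]

theorem exists_injective_path_range_subset_union [T2Space X] (hxy : x ≠ y) {α : Path x z}
    {β : Path z y} (hα : Injective α) (hβ : Injective β) :
    ∃ γ : Path x y, Injective γ ∧ range γ ⊆ range α ∪ range β := by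
  by_cases hxβ : x ∈ range β
  · obtain ⟨γ, hγ, hγβ⟩ := exists_injective_path_range_subset hβ hxβ β.target_mem_range hxy
    exact ⟨γ, hγ, hγβ.trans subset_union_right⟩
  by_cases hyα : y ∈ range α
  · obtain ⟨γ, hγ, hγα⟩ := exists_injective_path_range_subset hα α.source_mem_range hyα hxy
    exact ⟨γ, hγ, hγα.trans subset_union_left⟩
  have hcompact : IsCompact (α ⁻¹' range β) :=
    ((isCompact_range β.continuous).isClosed.preimage α.continuous).isCompact
  obtain ⟨s, ⟨t, hts⟩, hfirst⟩ := hcompact.exists_isLeast ⟨1, 0, by simp⟩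
  have hs : (0 : unitInterval) ≠ s := by
    rintro rfl
    exact hxβ ⟨t, hts.trans α.source⟩
  have ht : t ≠ 1 := by
    rintro rfl
    exact hyα ⟨s, hts.symm.trans β.target⟩
  let α' : Path x (α s) := (α.subpath 0 s).cast α.source.symm rfl
  let β' : Path (α s) y := (β.subpath t 1).cast hts.symm β.target.symm
  have hα' : range α' = α '' Icc 0 s := α.range_subpath_of_le 0 s unitInterval.nonneg'
  have hβ' : range β' ⊆ range β := (β.range_subpath t 1).trans_subset (image_subset_range _ _)
  have hmeet : range α' ∩ range β' ⊆ {α s} := by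
    rw [hα']
    rintro _ ⟨⟨u, hu, rfl⟩, hβu⟩
    exact congrArg α (le_antisymm hu.2 (hfirst (hβ' hβu)))
  refine ⟨α'.trans β', injective_path_trans (injective_path_subpath hα hs)
    (injective_path_subpath hβ ht) hmeet, ?_⟩
  rw [Path.trans_range]
  exact union_subset_union (hα' ▸ image_subset_range _ _) hβ'

end InjectivePaths

/-- `γ` restricted to `[0, dist x y]` is an isometric parametrisation of a geodesic from `x` to `y`;
its values outside this interval are irrelevant. -/
structure IsGeodesic {T : Type*} [PseudoMetricSpace T] (γ : ℝ → T) (x y : T) : Prop where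
  dist_eq : ∀ s ∈ Icc 0 (dist x y), ∀ t ∈ Icc 0 (dist x y), dist (γ s) (γ t) = |s - t|
  source : γ 0 = x
  target : γ (dist x y) = y

namespace IsGeodesic

variable {T : Type*} [PseudoMetricSpace T] {γ : ℝ → T} {x y v : T}

theorem injOn (hγ : IsGeodesic γ x y) : InjOn γ (Icc 0 (dist x y)) := fun s hs t ht hst => by
  simpa [hst, eq_comm, sub_eq_zero] using hγ.dist_eq s hs t ht

theorem continuousOn (hγ : IsGeodesic γ x y) : ContinuousOn γ (Icc 0 (dist x y)) :=
  (LipschitzOnWith.of_dist_le_mul (K := 1) fun s hs t ht => by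
    simp [hγ.dist_eq s hs t ht, Real.dist_eq]).continuousOn

theorem exists_injective_path (hγ : IsGeodesic γ x y) (hxy : 0 < dist x y) :
    ∃ η : Path x y, Injective η ∧ range η = γ '' Icc 0 (dist x y) := by
  let e := (iccHomeoI 0 (dist x y) hxy).symm
  refine ⟨⟨⟨fun u => γ (e u), hγ.continuousOn.comp_continuous (by fun_prop) fun u => (e u).2⟩,
    ?_, ?_⟩, ?_, ?_⟩
  · simp [e, hγ.source]
  · simp [e, hγ.target]
  · exact hγ.injOn.injective.comp e.injective
  · exact (e.surjective.range_comp ((Icc 0 (dist x y)).domRestrict γ)).trans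
      (range_domRestrict _ _)

theorem dist_add_dist (hγ : IsGeodesic γ x y) (hv : v ∈ γ '' Icc 0 (dist x y)) :
    dist x v + dist v y = dist x y := by
  obtain ⟨t, ht, rfl⟩ := hv
  have hx : dist x (γ t) = t := by
    simpa [hγ.source, abs_of_nonneg ht.1] using hγ.dist_eq 0 (left_mem_Icc.mpr dist_nonneg) t ht
  have hy : dist (γ t) y = dist x y - t := by
    simpa [hγ.target, abs_sub_comm t, abs_of_nonneg (sub_nonneg.mpr ht.2)] using
      hγ.dist_eq t ht _ (right_mem_Icc.mpr dist_nonneg)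
  rw [hx, hy, add_sub_cancel]

end IsGeodesic

/-- An `ℝ`-tree: a geodesic metric space, not necessarily compact or complete, in which every
injective path traces out the same set as every geodesic with the same endpoints. By
`range_eq`, a geodesic is determined on its interval by its endpoints. -/
structure IsRealTree (T : Type*) [MetricSpace T] : Prop where
  exists_isGeodesic : ∀ x y : T, ∃ γ : ℝ → T, IsGeodesic γ x y
  range_eq : ∀ {x y : T} {η : Path x y} {γ : ℝ → T}, Injective η → IsGeodesic γ x y →
    range η = γ '' Icc 0 (dist x y)

theorem IsRealTree.dist_add_dist_or {T : Type*} [MetricSpace T] (hT : IsRealTree T)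
    {γ : ℝ → T} {x y v : T} (hγ : IsGeodesic γ x y) (hv : v ∈ γ '' Icc 0 (dist x y)) (z : T) :
    dist x v + dist v z = dist x z ∨ dist z v + dist v y = dist z y := by
  rcases eq_or_ne x z with rfl | hxz
  · exact .inr (hγ.dist_add_dist hv)
  rcases eq_or_ne z y with rfl | hzy
  · exact .inl (hγ.dist_add_dist hv)
  rcases eq_or_ne x y with rfl | hxy
  · have hvx : v = x := by
      have := hγ.dist_add_dist hv
      rw [dist_comm x v, dist_self] at this
      exact dist_le_zero.mp (by linarith)
    simp [hvx]
  obtain ⟨γxz, hγxz⟩ := hT.exists_isGeodesic x z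
  obtain ⟨γzy, hγzy⟩ := hT.exists_isGeodesic z y
  obtain ⟨α, hα, hα_range⟩ := hγxz.exists_injective_path (dist_pos.mpr hxz)
  obtain ⟨β, hβ, hβ_range⟩ := hγzy.exists_injective_path (dist_pos.mpr hzy)
  obtain ⟨η, hη, hη_range⟩ := exists_injective_path_range_subset_union hxy hα hβ
  rw [← hT.range_eq hη hγ] at hv
  rcases hη_range hv with hvα | hvβ
  · exact .inl (hγxz.dist_add_dist (hα_range ▸ hvα))
  · exact .inr (hγzy.dist_add_dist (hβ_range ▸ hvβ))

theorem ball_inter_ball_eq_ball_of_dist_add_dist {X : Type*} [PseudoMetricSpace X] {x y v : X}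
    {δ ε : ℝ} (hv : dist x v + dist v y = dist x y)
    (hbranch : ∀ z, dist x v + dist v z = dist x z ∨ dist z v + dist v y = dist z y)
    (hvd : dist x v = (dist x y - ε + δ) / 2) :
    ball x δ ∩ ball y ε = ball v ((δ + ε - dist x y) / 2) := by
  ext z
  simp only [mem_inter_iff, mem_ball]
  refine ⟨fun ⟨hzδ, hzε⟩ => ?_, fun hzv => ⟨?_, ?_⟩⟩
  · rcases hbranch z with hxz | hzy
    · linarith [hzδ, dist_comm v z, dist_comm x z]
    · linarith [hzε]
  · linarith [dist_triangle z v x, dist_comm v x]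
  · linarith [dist_triangle z v y]

theorem stmt_4_general {T : Type*} [MetricSpace T] (hT : IsRealTree T) {γ : ℝ → T} {x y v : T}
    {δ ε : ℝ} (hγ : IsGeodesic γ x y) (hv : v ∈ γ '' Icc 0 (dist x y))
    (hvd : dist x v = (dist x y - ε + δ) / 2) :
    ball x δ ∩ ball y ε = ball v ((δ + ε - dist x y) / 2) :=
  ball_inter_ball_eq_ball_of_dist_add_dist (hγ.dist_add_dist hv) (hT.dist_add_dist_or hγ hv) hvd

namespace ContinuumTree

variable {T : Type*} [MetricSpace T] [CompactSpace T]

theorem isGeodesic (ct : ContinuumTree T) (x y : T) : IsGeodesic (ct.geodesic x y) x y :=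
  ⟨ct.geodesic_isometry x y, ct.geodesic_source x y, ct.geodesic_target x y⟩

theorem isRealTree (ct : ContinuumTree T) : IsRealTree T where
  exists_isGeodesic x y := ⟨ct.geodesic x y, ct.isGeodesic x y⟩
  range_eq {x y η γ} hη hγ := (ct.path_image x y η hη).trans
    (ct.geodesic_unique x y γ hγ.dist_eq hγ.source hγ.target).image_eq.symm

end ContinuumTree

/-- The intersection of two overlapping balls in a continuum tree is a ball centred at the
midpoint `v` of the overlap segment, of radius `r = (δ + ε - ℓ)/2`. -/
theorem stmt_4 {T : Type*} [MetricSpace T] [CompactSpace T] (ct : ContinuumTree T)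
    {x y : T} (hxy : x ≠ y) {δ ε : ℝ} (hδ0 : 0 < δ) (hε0 : 0 < ε)
    (hδℓ : δ ≤ dist x y) (hεℓ : ε ≤ dist x y) (hsum : dist x y < δ + ε)
    {v : T} (hv : v ∈ ct.seg x y) (hvd : dist x v = (dist x y - ε + δ) / 2) :
    Metric.ball x δ ∩ Metric.ball y ε = Metric.ball v ((δ + ε - dist x y) / 2) := by
  exact stmt_4_general ct.isRealTree (ct.isGeodesic x y) hv hvd
end

section
/- Let E and Ẽ be excursions with lifetimes T(E) and T(Ẽ), and let δ > 0 be such that sup_{t ∈ [0,∞)} |E(t) − Ẽ(t)| < δ. Then the Gromov–Hausdorff distance between the metric quotients T_E of ([0,T(E)], ρ_E) and T_Ẽ of ([0,T(Ẽ)], ρ_Ẽ) satisfies d_GH(T_E, T_Ẽ) ≤ 8δ. -/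
/-- `E` is an excursion with lifetime `T`: a continuous nonnegative function on `[0,∞)`
(extended by `0` to all of `ℝ`) vanishing at `0` and on `[T,∞)`, and strictly positive
on `(0,T)`. -/
def IsExcursion (E : ℝ → ℝ) (T : ℝ) : Prop :=
  Continuous E ∧ 0 < T ∧ (∀ t, 0 ≤ E t) ∧ (∀ t ≤ (0 : ℝ), E t = 0) ∧
    (∀ s, T ≤ s → E s = 0) ∧ (∀ t, 0 < t → t < T → 0 < E t)

/-- The pseudometric `ρ_E(s,t) = E(s) + E(t) - 2 inf {E(r) : min s t ≤ r ≤ max s t}`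
encoded by an excursion `E`. -/
noncomputable def excDist (E : ℝ → ℝ) (s t : ℝ) : ℝ :=
  E s + E t - 2 * sInf (E '' Set.Icc (min s t) (max s t))

/-!
Both trees are images of the single half-line `[0, ∞)`: since a coding function is constant after
its lifetime, times can be truncated at the lifetime without changing `ρ`. The two projections of
`[0, ∞)` therefore form a correspondence between the trees. The pseudometric `ρ_E(s, t)` is a sum
of two values of `E` minus twice an infimum of `E`, each of which moves by at most `δ` when `E`
does, so the correspondence has distortion at most `4δ`, and gluing the trees along it shows that
their Gromov–Hausdorff distance is at most half of that, `2δ`.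
-/

open Set Metric GromovHausdorff

section Correspondence

variable {X Y Z : Type*} [MetricSpace X] [CompactSpace X] [Nonempty X]
  [MetricSpace Y] [CompactSpace Y] [Nonempty Y]

lemma ghDist_le_of_surjective_of_pos {f : Z → X} {g : Z → Y} (hf : f.Surjective)
    (hg : g.Surjective) {ε : ℝ} (hε : 0 < ε)
    (h : ∀ p q, |dist (f p) (f q) - dist (g p) (g q)| ≤ 2 * ε) : ghDist X Y ≤ ε := by
  have : Nonempty Z := hf.nonempty
  let _ : MetricSpace (X ⊕ Y) := glueMetricApprox f g ε hε h
  have isometry_inl : Isometry (Sum.inl : X → X ⊕ Y) := Isometry.of_dist_eq fun _ _ => rfl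
  have isometry_inr : Isometry (Sum.inr : Y → X ⊕ Y) := Isometry.of_dist_eq fun _ _ => rfl
  have dist_glued (p : Z) : dist (Sum.inl (f p) : X ⊕ Y) (Sum.inr (g p)) ≤ ε :=
    (glueDist_glued_points f g ε p).le
  refine (ghDist_le_hausdorffDist isometry_inl isometry_inr).trans
    (hausdorffDist_le_of_mem_dist hε.le ?_ ?_)
  · rintro _ ⟨x, rfl⟩
    obtain ⟨p, rfl⟩ := hf x
    exact ⟨_, mem_range_self _, dist_glued p⟩
  · rintro _ ⟨y, rfl⟩
    obtain ⟨p, rfl⟩ := hg y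
    exact ⟨_, mem_range_self _, (dist_comm _ _).trans_le (dist_glued p)⟩

theorem ghDist_le_of_surjective {f : Z → X} {g : Z → Y} (hf : f.Surjective)
    (hg : g.Surjective) {ε : ℝ}
    (h : ∀ p q, |dist (f p) (f q) - dist (g p) (g q)| ≤ 2 * ε) : ghDist X Y ≤ ε := by
  obtain ⟨p⟩ : Nonempty Z := hf.nonempty
  have hε : 0 ≤ ε := by linarith [(abs_nonneg _).trans (h p p)]
  refine le_of_forall_pos_le_add fun η hη =>
    ghDist_le_of_surjective_of_pos hf hg (add_pos_of_nonneg_of_pos hε hη) fun p q => ?_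
  linarith [h p q]

end Correspondence

section Infimum

variable {α : Type*} {f g : α → ℝ} {s : Set α} {ε : ℝ}

lemma bddBelow_image_of_abs_sub_le (hf : BddBelow (f '' s))
    (h : ∀ x ∈ s, |f x - g x| ≤ ε) : BddBelow (g '' s) := by
  obtain ⟨m, hm⟩ := hf
  refine ⟨m - ε, forall_mem_image.2 fun x hx => ?_⟩
  linarith [hm (mem_image_of_mem f hx), (abs_le.1 (h x hx)).2]

lemma sInf_image_sub_sInf_image_le (hs : s.Nonempty) (hf : BddBelow (f '' s))
    (h : ∀ x ∈ s, f x - g x ≤ ε) : sInf (f '' s) - sInf (g '' s) ≤ ε := by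
  rw [sub_le_comm]
  refine le_csInf (hs.image g) (forall_mem_image.2 fun x hx => ?_)
  linarith [csInf_le hf (mem_image_of_mem f hx), h x hx]

lemma abs_sInf_image_sub_sInf_image_le (hs : s.Nonempty) (hf : BddBelow (f '' s))
    (h : ∀ x ∈ s, |f x - g x| ≤ ε) : |sInf (f '' s) - sInf (g '' s)| ≤ ε :=
  abs_sub_le_iff.2
    ⟨sInf_image_sub_sInf_image_le hs hf fun x hx => (abs_sub_le_iff.1 (h x hx)).1,
      sInf_image_sub_sInf_image_le hs (bddBelow_image_of_abs_sub_le hf h)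
        fun x hx => (abs_sub_le_iff.1 (h x hx)).2⟩

end Infimum

section ExcDist

variable {E E' : ℝ → ℝ} {T δ s t : ℝ}

lemma excDist_eq_sInf_uIcc (E : ℝ → ℝ) (s t : ℝ) :
    excDist E s t = E s + E t - 2 * sInf (E '' uIcc s t) := rfl

lemma abs_excDist_sub_excDist_le (hE : BddBelow (E '' uIcc s t))
    (h : ∀ r ∈ uIcc s t, |E r - E' r| ≤ δ) : |excDist E s t - excDist E' s t| ≤ 4 * δ := by
  have h_left := abs_le.1 (h s left_mem_uIcc)
  have h_right := abs_le.1 (h t right_mem_uIcc)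
  have h_inf := abs_le.1 (abs_sInf_image_sub_sInf_image_le nonempty_uIcc hE h)
  rw [excDist_eq_sInf_uIcc, excDist_eq_sInf_uIcc, abs_le]
  constructor <;> linarith

lemma excDist_comp {φ : ℝ → ℝ} (hφ : Monotone φ) (hφc : Continuous φ) (E : ℝ → ℝ) (s t : ℝ) :
    excDist (E ∘ φ) s t = excDist E (φ s) (φ t) := by
  rw [excDist_eq_sInf_uIcc, excDist_eq_sInf_uIcc, image_comp,
    hφc.continuousOn.image_uIcc_of_monotoneOn (hφ.monotoneOn _)]
  rfl

lemma excDist_min_min (hE : ∀ r, T ≤ r → E r = E T) (s t : ℝ) :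
    excDist E (min s T) (min t T) = excDist E s t := by
  have comp_min : E ∘ (min · T) = E := by
    funext r
    rcases le_total r T with hr | hr
    · simp only [Function.comp_apply, min_eq_left hr]
    · simp only [Function.comp_apply, min_eq_right hr, hE r hr]
  have monotone_min : Monotone (min · T) := fun _ _ h => min_le_min_right T h
  rw [← excDist_comp monotone_min (by fun_prop), comp_min]

end ExcDist

/-- `q` exhibits the metric space `X` as the tree coded by `E` with lifetime `T`, that is, as the
metric quotient of `([0, T], ρ_E)`. Only the values of `q` on `[0, T]` matter. -/
structure IsTreeProjection {X : Type*} [MetricSpace X] (E : ℝ → ℝ) (T : ℝ) (q : ℝ → X) :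
    Prop where
  exists_eq : ∀ x, ∃ t ∈ Icc 0 T, q t = x
  dist_eq : ∀ s ∈ Icc 0 T, ∀ t ∈ Icc 0 T, dist (q s) (q t) = excDist E s t

namespace IsTreeProjection

variable {X : Type*} [MetricSpace X] {E : ℝ → ℝ} {T : ℝ} {q : ℝ → X}

lemma surjective_comp_min (hq : IsTreeProjection E T q) :
    Function.Surjective fun t : Ici (0 : ℝ) => q (min t T) := fun x => by
  obtain ⟨t, ht, rfl⟩ := hq.exists_eq x
  exact ⟨⟨t, ht.1⟩, congrArg q (min_eq_left ht.2)⟩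

lemma lifetime_nonneg [Nonempty X] (hq : IsTreeProjection E T q) : 0 ≤ T := by
  obtain ⟨t, ht, -⟩ := hq.exists_eq (Classical.arbitrary X)
  exact ht.1.trans ht.2

lemma dist_comp_min [Nonempty X] (hq : IsTreeProjection E T q)
    (hE : ∀ t, T ≤ t → E t = E T) {s t : ℝ} (hs : 0 ≤ s) (ht : 0 ≤ t) :
    dist (q (min s T)) (q (min t T)) = excDist E s t := by
  have min_mem {r : ℝ} (hr : 0 ≤ r) : min r T ∈ Icc 0 T :=
    ⟨le_min hr hq.lifetime_nonneg, min_le_right r T⟩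
  rw [hq.dist_eq _ (min_mem hs) _ (min_mem ht), excDist_min_min hE]

end IsTreeProjection

namespace IsExcursion

variable {E E' : ℝ → ℝ} {T T' : ℝ}

lemma bddBelow_image (hE : IsExcursion E T) (s : Set ℝ) : BddBelow (E '' s) :=
  ⟨0, forall_mem_image.2 fun t _ => hE.2.2.1 t⟩

lemma eq_apply_lifetime (hE : IsExcursion E T) (t : ℝ) (ht : T ≤ t) : E t = E T := by
  obtain ⟨-, -, -, -, eq_zero, -⟩ := hE
  rw [eq_zero t ht, eq_zero T le_rfl]

lemma hasCompactSupport (hE : IsExcursion E T) : HasCompactSupport E := by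
  obtain ⟨-, -, -, eq_zero_left, eq_zero_right, -⟩ := hE
  refine HasCompactSupport.intro (isCompact_Icc (a := 0) (b := T)) fun t ht => ?_
  rcases le_total t 0 with h | h
  · exact eq_zero_left t h
  · exact eq_zero_right t (le_of_not_ge fun htT => ht ⟨h, htT⟩)

lemma abs_sub_le_iSup (hE : IsExcursion E T) (hE' : IsExcursion E' T') {t : ℝ} (ht : 0 ≤ t) :
    |E t - E' t| ≤ ⨆ r : Ici (0 : ℝ), |E r - E' r| := by
  obtain ⟨C, hC⟩ := (hE.1.sub hE'.1).bounded_above_of_compact_support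
    (hE.hasCompactSupport.sub hE'.hasCompactSupport)
  exact le_ciSup (f := fun r : Ici (0 : ℝ) => |E r - E' r|)
    ⟨C, forall_mem_range.2 fun r => hC r⟩ ⟨t, ht⟩

end IsExcursion

theorem stmt_10_general {E E' : ℝ → ℝ} {T T' : ℝ} {X Y : Type*}
    [MetricSpace X] [CompactSpace X] [Nonempty X] [MetricSpace Y] [CompactSpace Y] [Nonempty Y]
    {q : ℝ → X} {q' : ℝ → Y} (hq : IsTreeProjection E T q) (hq' : IsTreeProjection E' T' q')
    (hE : ∀ t, T ≤ t → E t = E T) (hE' : ∀ t, T' ≤ t → E' t = E' T')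
    (hbdd : BddBelow (E '' Ici 0)) {δ : ℝ} (hδ : ∀ t, 0 ≤ t → |E t - E' t| ≤ δ) :
    ghDist X Y ≤ 2 * δ := by
  refine ghDist_le_of_surjective hq.surjective_comp_min hq'.surjective_comp_min
    fun ⟨s, hs⟩ ⟨t, ht⟩ => ?_
  have uIcc_subset : uIcc s t ⊆ Ici 0 := ordConnected_Ici.uIcc_subset hs ht
  calc |dist (q (min s T)) (q (min t T)) - dist (q' (min s T')) (q' (min t T'))|
      = |excDist E s t - excDist E' s t| := by
        rw [hq.dist_comp_min hE hs ht, hq'.dist_comp_min hE' hs ht]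
    _ ≤ 4 * δ := abs_excDist_sub_excDist_le (hbdd.mono (image_mono uIcc_subset))
        fun r hr => hδ r (uIcc_subset hr)
    _ = 2 * (2 * δ) := by ring

/-- If two excursions are uniformly within `δ` of each other, the Gromov–Hausdorff distance
between the metric quotients of `([0,T(E)], ρ_E)` and `([0,T(Ẽ)], ρ_Ẽ)` is at most `8δ`.
The metric quotients are characterised as compact metric spaces `X`, `Y` together with
surjective maps `qE`, `qE'` from the respective intervals realising the pseudometrics. -/
theorem stmt_10 {E E' : ℝ → ℝ} {TE TE' : ℝ} (hE : IsExcursion E TE)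
    (hE' : IsExcursion E' TE')
    {X Y : Type*} [MetricSpace X] [CompactSpace X] [Nonempty X]
    [MetricSpace Y] [CompactSpace Y] [Nonempty Y]
    (qE : ℝ → X) (qE' : ℝ → Y)
    (hqE_surj : ∀ p : X, ∃ t ∈ Set.Icc (0 : ℝ) TE, qE t = p)
    (hqE_dist : ∀ s ∈ Set.Icc (0 : ℝ) TE, ∀ t ∈ Set.Icc (0 : ℝ) TE,
      dist (qE s) (qE t) = excDist E s t)
    (hqE'_surj : ∀ p : Y, ∃ t ∈ Set.Icc (0 : ℝ) TE', qE' t = p)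
    (hqE'_dist : ∀ s ∈ Set.Icc (0 : ℝ) TE', ∀ t ∈ Set.Icc (0 : ℝ) TE',
      dist (qE' s) (qE' t) = excDist E' s t)
    {δ : ℝ} (hδ : 0 < δ)
    (hsup : (⨆ t : Set.Ici (0 : ℝ), |E t.1 - E' t.1|) < δ) :
    GromovHausdorff.ghDist X Y ≤ 8 * δ := by
  have h : GromovHausdorff.ghDist X Y ≤ 2 * δ :=
    stmt_10_general ⟨hqE_surj, hqE_dist⟩ ⟨hqE'_surj, hqE'_dist⟩ hE.eq_apply_lifetime
      hE'.eq_apply_lifetime (hE.bddBelow_image _)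
      fun _ ht => (hE.abs_sub_le_iSup hE' ht).trans hsup.le
  linarith
end

section
/- Let E be an excursion of lifetime 1 and let s ∈ (0,1). Define f_sE : [0,1] → [0,∞) by f_sE(t) = ρ_E(s, s+t) for t ∈ [0, 1−s] and f_sE(t) = ρ_E(s, s+t−1) for t ∈ [1−s, 1], and define u : [0,1] → [0,1] by u(t) = s+t for t ∈ [0, 1−s] and u(t) = s+t−1 for t ∈ [1−s, 1]. Then for all t₁, t₂ ∈ [0,1] one has ρ_{f_sE}(t₁, t₂) = ρ_E(u(t₁), u(t₂)), where ρ_{f_sE}(t₁,t₂) := f_sE(t₁) + f_sE(t₂) − 2·inf{f_sE(r) : min(t₁,t₂) ≤ r ≤ max(t₁,t₂)}. -/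
/-!
Write `m(a, b)` for the infimum of `E` between `a` and `b`. If `a` lies between `s` and `b`, then
the minimum of `r ↦ ρ_E(s, r)` between `a` and `b` is attained at the first point, going from `a` to
`b`, at which `E` takes the value `max (m(s, a)) (m(a, b))`. Since `m(s, b)` is the corresponding
`min` and `max + min` is the sum, `ρ_E(s, ·)` encodes the same pseudometric as `E` on every interval
that does not contain `s` in its interior. This settles the case of two times that are not separated
by the gluing time `T - s`. In the remaining case both sides of the identity are computed by
cutting: the left one at the gluing time, which is the point `0 ~ T` of the tree, and the right one
at `s`.
-/

open Set

section FirstHit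

variable {δ : Type*} [LinearOrder δ] [TopologicalSpace δ] [OrderClosedTopology δ]

theorem exists_first_hit_uIcc {f : ℝ → δ} {a b : ℝ} {c : δ} (hf : ContinuousOn f (uIcc a b))
    (hb : f b ≤ c) (ha : c ≤ f a) :
    ∃ r ∈ uIcc a b, f r = c ∧ ∀ x ∈ uIcc a r, c ≤ f x := by
  have hcompact : IsCompact (uIcc a b ∩ f ⁻¹' {c}) :=
    isCompact_uIcc.of_isClosed_subset
      (hf.preimage_isClosed_of_isClosed isCompact_uIcc.isClosed isClosed_singleton)
      inter_subset_left
  have hne : (uIcc a b ∩ f ⁻¹' {c}).Nonempty :=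
    intermediate_value_uIcc hf (mem_uIcc_of_ge hb ha)
  have hdist_cont : Continuous (dist a) := continuous_const.dist continuous_id
  obtain ⟨r, ⟨hr, hfr⟩, hclosest⟩ := hcompact.exists_isMinOn hne hdist_cont.continuousOn
  refine ⟨r, hr, hfr, fun x hx => ?_⟩
  by_contra! hlt
  have hxb : uIcc a x ⊆ uIcc a b := uIcc_subset_uIcc_left (uIcc_subset_uIcc_left hr hx)
  obtain ⟨y, hy, hfy⟩ := intermediate_value_uIcc (hf.mono hxb) (mem_uIcc_of_ge hlt.le ha)
  have hyr : y = r := by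
    have hdist : |a - r| ≤ |a - y| := hclosest ⟨hxb hy, hfy⟩
    grind [mem_uIcc]
  have hxr : x = r := eq_of_mem_uIcc_of_mem_uIcc' hx (hyr ▸ hy)
  exact hlt.ne (hxr ▸ hfr)

end FirstHit

theorem uIcc_union_uIcc_of_mem {α : Type*} [LinearOrder α] {a b c : α} (hb : b ∈ uIcc a c) :
    uIcc a b ∪ uIcc b c = uIcc a c :=
  (union_subset (uIcc_subset_uIcc_left hb) (uIcc_subset_uIcc_right hb)).antisymm
    uIcc_subset_uIcc_union_uIcc

/-- The infimum of `E` over the interval with endpoints `a` and `b`, in either order: the term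
subtracted (twice) in `excDist E a b`. It is `0` when `E` is not bounded below there. -/
noncomputable def infBetween (E : ℝ → ℝ) (a b : ℝ) : ℝ :=
  sInf (E '' uIcc a b)

section InfBetween

variable {E : ℝ → ℝ} {a b c r : ℝ}

theorem infBetween_le (hE : BddBelow (E '' uIcc a b)) (hr : r ∈ uIcc a b) :
    infBetween E a b ≤ E r :=
  csInf_le hE (mem_image_of_mem E hr)

theorem le_infBetween {m : ℝ} (hm : ∀ x ∈ uIcc a b, m ≤ E x) : m ≤ infBetween E a b :=
  le_csInf (nonempty_uIcc.image E) (forall_mem_image.2 hm)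

theorem infBetween_eq_min (hE : BddBelow (E '' uIcc a c)) (hb : b ∈ uIcc a c) :
    infBetween E a c = min (infBetween E a b) (infBetween E b c) := by
  have hleft := hE.mono (image_mono (uIcc_subset_uIcc_left hb))
  have hright := hE.mono (image_mono (uIcc_subset_uIcc_right hb))
  rw [infBetween, ← uIcc_union_uIcc_of_mem hb, image_union,
    csInf_union hleft (nonempty_uIcc.image E) hright (nonempty_uIcc.image E)]
  rfl

end InfBetween

section ExcDist

variable {E F : ℝ → ℝ} {a b c s : ℝ}

theorem excDist_eq_sub_infBetween (E : ℝ → ℝ) (a b : ℝ) :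
    excDist E a b = E a + E b - 2 * infBetween E a b :=
  rfl

theorem excDist_comm (E : ℝ → ℝ) (a b : ℝ) : excDist E a b = excDist E b a := by
  simp only [excDist_eq_sub_infBetween, infBetween, uIcc_comm a b, add_comm (E a)]

theorem excDist_nonneg (hE : BddBelow (E '' uIcc a b)) : 0 ≤ excDist E a b := by
  have ha := infBetween_le hE left_mem_uIcc
  have hb := infBetween_le hE right_mem_uIcc
  rw [excDist_eq_sub_infBetween]
  linarith

theorem excDist_congr (h : EqOn E F (uIcc a b)) : excDist E a b = excDist F a b := by
  simp only [excDist_eq_sub_infBetween, infBetween, h.image_eq, h left_mem_uIcc, h right_mem_uIcc]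

theorem excDist_comp_const_add (E : ℝ → ℝ) (c a b : ℝ) :
    excDist (fun t => E (c + t)) a b = excDist E (c + a) (c + b) := by
  simp only [excDist_eq_sub_infBetween, infBetween, ← image_const_add_uIcc, image_image]

theorem excDist_eq_max (hE : BddBelow (E '' uIcc a c)) (hb : b ∈ uIcc a c) :
    excDist E a c = max (excDist E a b + E c - E b) (excDist E b c + E a - E b) := by
  simp only [excDist_eq_sub_infBetween, infBetween_eq_min hE hb]
  grind

theorem excDist_eq_sub_of_isMinOn (h : IsMinOn E (uIcc a b) a) : excDist E a b = E b - E a := by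
  have hinf : infBetween E a b = E a :=
    IsLeast.csInf_eq ⟨mem_image_of_mem E left_mem_uIcc, forall_mem_image.2 (isMinOn_iff.1 h)⟩
  rw [excDist_eq_sub_infBetween, hinf]
  ring

theorem isLeast_image_excDist (hE : ContinuousOn E (uIcc s b)) (ha : a ∈ uIcc s b) :
    IsLeast (excDist E s '' uIcc a b)
      (E s + max (infBetween E s a) (infBetween E a b) - 2 * infBetween E s a) := by
  have hbdd : ∀ x ∈ uIcc s b, ∀ y ∈ uIcc s b, BddBelow (E '' uIcc x y) := fun x hx y hy =>
    (isCompact_uIcc.bddBelow_image hE).mono (image_mono (uIcc_subset_uIcc hx hy))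
  have hsub : uIcc a b ⊆ uIcc s b := uIcc_subset_uIcc_right ha
  have hsplit : ∀ r ∈ uIcc a b,
      infBetween E s r = min (infBetween E s a) (infBetween E a r) := fun r hr =>
    infBetween_eq_min (hbdd s left_mem_uIcc r (hsub hr)) (by grind [mem_uIcc])
  constructor
  · obtain ⟨q, hq, hEq⟩ :=
      isCompact_uIcc.exists_sInf_image_eq nonempty_uIcc (hE.mono hsub)
    have hqb : uIcc a q ⊆ uIcc a b := uIcc_subset_uIcc_left hq
    have hlow : E q ≤ max (infBetween E s a) (infBetween E a b) :=
      hEq.symm.trans_le (le_max_right _ _)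
    have hhigh : max (infBetween E s a) (infBetween E a b) ≤ E a :=
      max_le (infBetween_le (hbdd s left_mem_uIcc a ha) right_mem_uIcc)
        (infBetween_le (hbdd a ha b right_mem_uIcc) left_mem_uIcc)
    obtain ⟨r, hr, hEr, hfirst⟩ :=
      exists_first_hit_uIcc (hE.mono (hqb.trans hsub)) hlow hhigh
    refine ⟨r, hqb hr, ?_⟩
    have hinf : infBetween E s r = infBetween E s a := by
      rw [hsplit r (hqb hr), min_eq_left ((le_max_left _ _).trans (le_infBetween hfirst))]
    rw [excDist_eq_sub_infBetween, hEr, hinf]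
  · rintro _ ⟨r, hr, rfl⟩
    have hsa : infBetween E s r ≤ infBetween E s a := (hsplit r hr).trans_le (min_le_left _ _)
    have hsr : infBetween E s r ≤ E r :=
      infBetween_le (hbdd s left_mem_uIcc r (hsub hr)) right_mem_uIcc
    have hab : infBetween E a b ≤ E r := infBetween_le (hbdd a ha b right_mem_uIcc) hr
    rw [excDist_eq_sub_infBetween]
    grind

theorem excDist_excDist (hE : ContinuousOn E (uIcc s b)) (ha : a ∈ uIcc s b) :
    excDist (excDist E s) a b = excDist E a b := by
  have hmin : infBetween (excDist E s) a b =
      E s + max (infBetween E s a) (infBetween E a b) - 2 * infBetween E s a :=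
    (isLeast_image_excDist hE ha).csInf_eq
  have hsplit := infBetween_eq_min (isCompact_uIcc.bddBelow_image hE) ha
  have hsum := min_add_max (infBetween E s a) (infBetween E a b)
  rw [excDist_eq_sub_infBetween (excDist E s), hmin]
  simp only [excDist_eq_sub_infBetween, hsplit]
  linarith

end ExcDist

/-- The time change `u` of the rerooting at `s`: the rotation by `s` of `[0, T]` with its endpoints
identified. The gluing time `T - s` is sent to `T` rather than to `0`. -/
noncomputable def cyclicShift (T s t : ℝ) : ℝ :=
  if t ≤ T - s then s + t else s + t - T

/-- The rerooting `f_sE` of `E : [0, T] → ℝ` at `s`: the distance to `s` in the tree encoded by `E`,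
as a function of the time measured cyclically from `s`. -/
noncomputable def reroot (E : ℝ → ℝ) (T s t : ℝ) : ℝ :=
  excDist E s (cyclicShift T s t)

section Reroot

variable {E : ℝ → ℝ} {T s t t₁ t₂ : ℝ}

theorem cyclicShift_of_le (ht : t ≤ T - s) : cyclicShift T s t = s + t :=
  if_pos ht

theorem cyclicShift_of_lt (ht : T - s < t) : cyclicShift T s t = s - T + t := by
  rw [cyclicShift, if_neg ht.not_ge]
  ring

theorem cyclicShift_mem_Icc (hs : s ∈ Icc 0 T) (ht : t ∈ Icc 0 T) :
    cyclicShift T s t ∈ Icc 0 T := by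
  grind [cyclicShift]

theorem reroot_eq_ite (E : ℝ → ℝ) (T s : ℝ) :
    reroot E T s =
      fun t => if t ≤ T - s then excDist E s (s + t) else excDist E s (s + t - T) :=
  funext fun _ => apply_ite (excDist E s) _ _ _

theorem excDist_zero_right (hmin : IsMinOn E (Icc 0 T) 0) (ht : t ∈ Icc 0 T) :
    excDist E t 0 = E t - E 0 := by
  rw [excDist_comm]
  exact excDist_eq_sub_of_isMinOn
    (hmin.on_subset (uIcc_subset_Icc (left_mem_Icc.2 (ht.1.trans ht.2)) ht))

theorem excDist_lifetime_right (hmin : IsMinOn E (Icc 0 T) 0) (hends : E T = E 0)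
    (ht : t ∈ Icc 0 T) : excDist E t T = E t - E 0 := by
  have hminT : IsMinOn E (Icc 0 T) T :=
    isMinOn_iff.2 fun x hx => hends.trans_le (isMinOn_iff.1 hmin x hx)
  rw [excDist_comm, ← hends]
  exact excDist_eq_sub_of_isMinOn
    (hminT.on_subset (uIcc_subset_Icc (right_mem_Icc.2 (ht.1.trans ht.2)) ht))

theorem bddBelow_image_reroot (hE : BddBelow (E '' Icc 0 T)) (hs : s ∈ Icc 0 T) :
    BddBelow (reroot E T s '' Icc 0 T) :=
  ⟨0, forall_mem_image.2 fun _ ht => excDist_nonneg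
    (hE.mono (image_mono (uIcc_subset_Icc hs (cyclicShift_mem_Icc hs ht))))⟩

theorem eqOn_reroot_Iic : EqOn (reroot E T s) (fun t => excDist E s (s + t)) (Iic (T - s)) :=
  fun _ ht => congrArg (excDist E s) (cyclicShift_of_le ht)

theorem eqOn_reroot_Ici (hmin : IsMinOn E (Icc 0 T) 0) (hends : E T = E 0) (hs : s ∈ Icc 0 T) :
    EqOn (reroot E T s) (fun t => excDist E s (s - T + t)) (Ici (T - s)) := by
  intro t ht
  rcases (mem_Ici.1 ht).eq_or_lt with rfl | hlt
  · simp only [reroot, cyclicShift_of_le le_rfl, add_sub_cancel, sub_add_sub_cancel', sub_self,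
      excDist_zero_right hmin hs, excDist_lifetime_right hmin hends hs]
  · exact congrArg (excDist E s) (cyclicShift_of_lt hlt)

theorem excDist_reroot_of_le (hE : ContinuousOn E (Icc 0 T)) (hs : 0 ≤ s) (h₁ : 0 ≤ t₁)
    (h₁₂ : t₁ ≤ t₂) (h₂ : t₂ ≤ T - s) :
    excDist (reroot E T s) t₁ t₂ = excDist E (s + t₁) (s + t₂) := by
  have hsub : uIcc t₁ t₂ ⊆ Iic (T - s) := by
    rw [uIcc_of_le h₁₂]
    exact fun t ht => ht.2.trans h₂
  have hsub' : uIcc s (s + t₂) ⊆ Icc 0 T :=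
    uIcc_subset_Icc ⟨hs, by linarith⟩ ⟨by linarith, by linarith⟩
  rw [excDist_congr (eqOn_reroot_Iic.mono hsub), excDist_comp_const_add (excDist E s),
    excDist_excDist (hE.mono hsub') (mem_uIcc_of_le (by linarith) (by linarith))]

theorem excDist_reroot_of_ge (hE : ContinuousOn E (Icc 0 T)) (hmin : IsMinOn E (Icc 0 T) 0)
    (hends : E T = E 0) (hs : s ∈ Icc 0 T) (h₁ : T - s ≤ t₁) (h₁₂ : t₁ ≤ t₂) (h₂ : t₂ ≤ T) :
    excDist (reroot E T s) t₁ t₂ = excDist E (s - T + t₁) (s - T + t₂) := by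
  have hsub : uIcc t₁ t₂ ⊆ Ici (T - s) := by
    rw [uIcc_of_le h₁₂]
    exact fun t ht => h₁.trans ht.1
  have hsub' : uIcc s (s - T + t₁) ⊆ Icc 0 T :=
    uIcc_subset_Icc hs ⟨by linarith, by linarith [hs.2]⟩
  rw [excDist_congr ((eqOn_reroot_Ici hmin hends hs).mono hsub),
    excDist_comp_const_add (excDist E s), excDist_comm, excDist_comm E,
    excDist_excDist (hE.mono hsub') (mem_uIcc_of_ge (by linarith) (by linarith))]

theorem excDist_reroot_of_le_of_ge (hE : ContinuousOn E (Icc 0 T)) (hmin : IsMinOn E (Icc 0 T) 0)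
    (hends : E T = E 0) (hs : s ∈ Icc 0 T) (ht₁ : t₁ ∈ Icc 0 (T - s)) (ht₂ : t₂ ∈ Icc (T - s) T) :
    excDist (reroot E T s) t₁ t₂ = excDist E (s + t₁) (s - T + t₂) := by
  obtain ⟨h₁, h₁'⟩ := ht₁
  obtain ⟨h₂, h₂'⟩ := ht₂
  have hu₁ : s + t₁ ∈ Icc 0 T := ⟨add_nonneg hs.1 h₁, by linarith⟩
  have hu₂ : s - T + t₂ ∈ Icc 0 T := ⟨by linarith, by linarith [hs.2]⟩
  have hbddE := isCompact_Icc.bddBelow_image hE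
  have hbdd : BddBelow (reroot E T s '' uIcc t₁ t₂) := (bddBelow_image_reroot hbddE hs).mono
    (image_mono (uIcc_subset_Icc ⟨h₁, by linarith [hs.1]⟩ ⟨by linarith [hs.2], h₂'⟩))
  have hf₁ : reroot E T s t₁ = excDist E s (s + t₁) := eqOn_reroot_Iic h₁'
  have hf₂ : reroot E T s t₂ = excDist E s (s - T + t₂) := eqOn_reroot_Ici hmin hends hs h₂
  have hglue : reroot E T s (T - s) = E s - E 0 := by
    rw [reroot, cyclicShift_of_le le_rfl, add_sub_cancel, excDist_lifetime_right hmin hends hs]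
  have hleft : excDist (reroot E T s) t₁ (T - s) = E (s + t₁) - E 0 := by
    rw [excDist_reroot_of_le hE hs.1 h₁ h₁' le_rfl, add_sub_cancel,
      excDist_lifetime_right hmin hends hu₁]
  have hright : excDist (reroot E T s) (T - s) t₂ = E (s - T + t₂) - E 0 := by
    rw [excDist_reroot_of_ge hE hmin hends hs le_rfl h₂ h₂', sub_add_sub_cancel', sub_self,
      excDist_comm, excDist_zero_right hmin hu₂]
  rw [excDist_eq_max hbdd (mem_uIcc_of_le h₁' h₂), hleft, hright, hglue, hf₁, hf₂,
    excDist_eq_max (hbddE.mono (image_mono (uIcc_subset_Icc hu₁ hu₂)))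
      (mem_uIcc_of_ge (by linarith) (by linarith) : s ∈ uIcc (s + t₁) (s - T + t₂)),
    excDist_comm E (s + t₁) s, max_comm]
  congr 1 <;> ring

theorem stmt_11_general (hE : ContinuousOn E (Icc 0 T)) (hmin : IsMinOn E (Icc 0 T) 0)
    (hends : E T = E 0) (hs : s ∈ Icc 0 T) (ht₁ : t₁ ∈ Icc 0 T) (ht₂ : t₂ ∈ Icc 0 T) :
    excDist (reroot E T s) t₁ t₂ = excDist E (cyclicShift T s t₁) (cyclicShift T s t₂) := by
  wlog h₁₂ : t₁ ≤ t₂ generalizing t₁ t₂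
  · rw [excDist_comm, excDist_comm E, this ht₂ ht₁ (le_of_not_ge h₁₂)]
  rcases le_or_gt t₂ (T - s) with h₂ | h₂
  · rw [cyclicShift_of_le (h₁₂.trans h₂), cyclicShift_of_le h₂,
      excDist_reroot_of_le hE hs.1 ht₁.1 h₁₂ h₂]
  rcases le_or_gt t₁ (T - s) with h₁ | h₁
  · rw [cyclicShift_of_le h₁, cyclicShift_of_lt h₂,
      excDist_reroot_of_le_of_ge hE hmin hends hs ⟨ht₁.1, h₁⟩ ⟨h₂.le, ht₂.2⟩]
  · rw [cyclicShift_of_lt h₁, cyclicShift_of_lt h₂,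
      excDist_reroot_of_ge hE hmin hends hs h₁.le h₁₂ ht₂.2]

end Reroot

section IsExcursion

variable {E : ℝ → ℝ} {T : ℝ}

theorem IsExcursion.isMinOn_zero (hE : IsExcursion E T) : IsMinOn E (Icc 0 T) 0 := by
  obtain ⟨-, -, hnonneg, hzero, -, -⟩ := hE
  exact isMinOn_iff.2 fun t _ => (hzero 0 le_rfl).trans_le (hnonneg t)

theorem IsExcursion.apply_lifetime_eq (hE : IsExcursion E T) : E T = E 0 := by
  obtain ⟨-, -, -, hzero, hlifetime, -⟩ := hE
  exact (hlifetime T le_rfl).trans (hzero 0 le_rfl).symm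

end IsExcursion

/-- The rerooting identity: for an excursion `E` of lifetime `1` and `s ∈ (0,1)`, the
pseudometric of the rerooted excursion `f_sE` agrees with the original pseudometric under
the cyclic time shift `u`. -/
theorem stmt_11 {E : ℝ → ℝ} (hE : IsExcursion E 1) {s : ℝ} (hs : s ∈ Set.Ioo (0 : ℝ) 1) :
    ∀ t₁ ∈ Set.Icc (0 : ℝ) 1, ∀ t₂ ∈ Set.Icc (0 : ℝ) 1,
      excDist (fun t => if t ≤ 1 - s then excDist E s (s + t) else excDist E s (s + t - 1))
          t₁ t₂ =
        excDist E (if t₁ ≤ 1 - s then s + t₁ else s + t₁ - 1)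
          (if t₂ ≤ 1 - s then s + t₂ else s + t₂ - 1) := by
  intro t₁ ht₁ t₂ ht₂
  simpa only [reroot_eq_ite, cyclicShift] using
    stmt_11_general hE.1.continuousOn hE.isMinOn_zero hE.apply_lifetime_eq
      (Ioo_subset_Icc_self hs) ht₁ ht₂
end

section
/- Let (T, ρ) be a continuum tree equipped with a finite Borel measure λ. Let x, y ∈ T be distinct, set ℓ = ρ(x,y), let δ ∈ (0, ℓ), and let z be the unique point of [[x,y]] with ρ(x,z) = δ/2. Then ∫_{B_δ(x)} ρ(σ,y) dλ(σ) ≥ λ(B_δ(x) ∖ B_{δ/2}(z))·ℓ + (δ/2)·λ(O_δ(x,y) ∖ O_{δ/2}(x,y)) + ∫_{B_{δ/2}(z)} ρ(σ,y) dλ(σ). -/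
/-- The offspring part `O_δ(x,y) = B_δ(x) ∩ (T ∖ T^x(y))` of the ball `B_δ(x)` relative
to `y`, where `T^x(y)` is the connected component of `T ∖ {x}` containing `y`. -/
def offspringPart {T : Type*} [MetricSpace T] (δ : ℝ) (x y : T) : Set T :=
  Metric.ball x δ ∩ (connectedComponentIn {x}ᶜ y)ᶜ

/-!
Two segments meeting only at a common endpoint `p` concatenate to an injective path, so their union
is the segment between the other two endpoints. Applied to the point `p` of `[[x, y]]` nearest to
`σ`, this shows that every `z ∈ [[x, y]]` lies on `[[σ, x]]` or on `[[σ, y]]`. A point `σ` of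
`B_δ(x) ∖ B_{δ/2}(z)` is too close to `x` for the former, so `[[σ, y]]` runs through `z` and
`ρ(σ, y) ≥ δ/2 + ρ(z, y) = ℓ`. If moreover `σ` lies in `O_δ(x, y) ∖ O_{δ/2}(x, y)`, then `[[σ, y]]`
runs through `x` and `ρ(σ, y) ≥ ℓ + δ/2`. The bound follows by splitting the integral over
`B_δ(x)` along `B_{δ/2}(z)` and applying Markov's inequality to `ρ(·, y) - ℓ` on the difference of
the two balls.
-/

theorem injective_path_trans_s12 {X : Type*} [TopologicalSpace X] {a b c : X} {γ : Path a b}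
    {γ' : Path b c} (hγ : Function.Injective γ) (hγ' : Function.Injective γ')
    (h : Set.range γ ∩ Set.range γ' ⊆ {b}) : Function.Injective (γ.trans γ') := by
  have halves_disjoint {s t : unitInterval} (ht : t ≠ 0) : γ s ≠ γ' t := fun e =>
    ht (hγ' (by rw [γ'.source]; exact h ⟨⟨s, e⟩, t, rfl⟩))
  intro s t hst
  simp only [Path.trans_apply] at hst
  split_ifs at hst with hs ht ht
  · exact Subtype.ext (by linarith [Subtype.ext_iff.mp (hγ hst)])
  · refine absurd hst (halves_disjoint fun h0 => ht ?_)
    linarith [Subtype.ext_iff.mp h0, Set.Icc.coe_zero (R := ℝ)]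
  · refine absurd hst.symm (halves_disjoint fun h0 => hs ?_)
    linarith [Subtype.ext_iff.mp h0, Set.Icc.coe_zero (R := ℝ)]
  · exact Subtype.ext (by linarith [Subtype.ext_iff.mp (hγ' hst)])

namespace ContinuumTree

variable {T : Type*} [MetricSpace T] [CompactSpace T] (ct : ContinuumTree T) {x y z p σ : T}

theorem dist_geodesic_mul (x y : T) (s t : unitInterval) :
    dist (ct.geodesic x y (s * dist x y)) (ct.geodesic x y (t * dist x y)) =
      dist x y * dist s t := by
  have mem_Icc (r : unitInterval) : (r : ℝ) * dist x y ∈ Set.Icc 0 (dist x y) :=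
    ⟨mul_nonneg r.2.1 dist_nonneg, mul_le_of_le_one_left dist_nonneg r.2.2⟩
  rw [ct.geodesic_isometry x y _ (mem_Icc s) _ (mem_Icc t), ← sub_mul, abs_mul,
    abs_of_nonneg dist_nonneg, mul_comm, Subtype.dist_eq, Real.dist_eq]

/-- The geodesic from `x` to `y` as a path, reparametrised proportionally to arc length on the
unit interval, so that it can be concatenated and fed to `ContinuumTree.path_image`. -/
def geodesicPath (x y : T) : Path x y where
  toFun t := ct.geodesic x y (t * dist x y)
  continuous_toFun := (LipschitzWith.of_dist_le_mul (K := nndist x y) fun s t =>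
    (ct.dist_geodesic_mul x y s t).le).continuous
  source' := by rw [Set.Icc.coe_zero, zero_mul, ct.geodesic_source]
  target' := by rw [Set.Icc.coe_one, one_mul, ct.geodesic_target]

theorem dist_geodesicPath (x y : T) (s t : unitInterval) :
    dist (ct.geodesicPath x y s) (ct.geodesicPath x y t) = dist x y * dist s t :=
  ct.dist_geodesic_mul x y s t

theorem geodesicPath_injective (hxy : x ≠ y) : Function.Injective (ct.geodesicPath x y) := by
  intro s t hst
  have h := ct.dist_geodesicPath x y s t
  rw [hst, dist_self, eq_comm, mul_eq_zero] at h
  exact dist_eq_zero.mp (h.resolve_left (dist_ne_zero.mpr hxy))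

theorem range_geodesicPath (x y : T) : Set.range (ct.geodesicPath x y) = ct.seg x y :=
  calc Set.range (ct.geodesicPath x y)
      = ct.geodesic x y '' ((· * dist x y) '' Set.Icc 0 1) := by
        rw [Set.image_image, Set.image_eq_range]; rfl
    _ = ct.seg x y := by
        rw [Set.image_mul_right_Icc zero_le_one dist_nonneg, zero_mul, one_mul]; rfl

theorem left_mem_seg (x y : T) : x ∈ ct.seg x y :=
  ⟨0, Set.left_mem_Icc.mpr dist_nonneg, ct.geodesic_source x y⟩

theorem right_mem_seg (x y : T) : y ∈ ct.seg x y :=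
  ⟨dist x y, Set.right_mem_Icc.mpr dist_nonneg, ct.geodesic_target x y⟩

variable {ct} in
theorem dist_add_dist_of_mem_seg (hz : z ∈ ct.seg x y) :
    dist x z + dist z y = dist x y := by
  obtain ⟨t, ht, rfl⟩ := hz
  have from_source := ct.geodesic_isometry x y 0 (Set.left_mem_Icc.mpr dist_nonneg) t ht
  have to_target := ct.geodesic_isometry x y t ht _ (Set.right_mem_Icc.mpr dist_nonneg)
  rw [ct.geodesic_source, abs_sub_comm, abs_of_nonneg (by linarith [ht.1])] at from_source
  rw [ct.geodesic_target, abs_sub_comm, abs_of_nonneg (by linarith [ht.2])] at to_target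
  linarith

theorem seg_self (x : T) : ct.seg x x = {x} := by
  rw [seg, dist_self, Set.Icc_self, Set.image_singleton, ct.geodesic_source]

theorem seg_union_seg_of_inter_subset (h : ct.seg x p ∩ ct.seg p y ⊆ {p}) :
    ct.seg x p ∪ ct.seg p y = ct.seg x y := by
  rcases eq_or_ne x p with rfl | hxp
  · rw [seg_self, Set.singleton_union, Set.insert_eq_of_mem (ct.left_mem_seg x y)]
  rcases eq_or_ne p y with rfl | hpy
  · rw [seg_self, Set.union_singleton, Set.insert_eq_of_mem (ct.right_mem_seg x p)]
  simp only [← range_geodesicPath] at h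
  have h_inj := injective_path_trans_s12 (ct.geodesicPath_injective hxp)
    (ct.geodesicPath_injective hpy) h
  calc ct.seg x p ∪ ct.seg p y
      = Set.range ((ct.geodesicPath x p).trans (ct.geodesicPath p y)) := by
        rw [Path.trans_range, range_geodesicPath, range_geodesicPath]
    _ = ct.seg x y := ct.path_image x y _ h_inj

theorem seg_union_seg_of_dist_add_dist (h : dist x p + dist p y = dist x y) :
    ct.seg x p ∪ ct.seg p y = ct.seg x y := by
  refine ct.seg_union_seg_of_inter_subset fun w ⟨hxw, hwy⟩ => dist_le_zero.mp ?_
  have := dist_add_dist_of_mem_seg hxw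
  have := dist_add_dist_of_mem_seg hwy
  linarith [dist_triangle x w y, dist_comm p w]

theorem mem_seg_iff : z ∈ ct.seg x y ↔ dist x z + dist z y = dist x y := by
  refine ⟨dist_add_dist_of_mem_seg, fun h => ?_⟩
  rw [← ct.seg_union_seg_of_dist_add_dist h]
  exact .inl (ct.right_mem_seg x z)

theorem seg_comm (x y : T) : ct.seg x y = ct.seg y x := by
  ext z
  rw [mem_seg_iff, mem_seg_iff, dist_comm x z, dist_comm z y, dist_comm x y, add_comm]

theorem seg_inter_subset_singleton_of_nearest {S : Set T}
    (hp : ∀ q ∈ S, dist σ p ≤ dist σ q) : ct.seg σ p ∩ S ⊆ {p} := by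
  rintro q ⟨hq, hqS⟩
  exact dist_le_zero.mp (by linarith [dist_add_dist_of_mem_seg hq, hp q hqS])

theorem exists_nearest_mem_seg (x y σ : T) :
    ∃ p ∈ ct.seg x y, ∀ q ∈ ct.seg x y, dist σ p ≤ dist σ q := by
  have h_compact : IsCompact (ct.seg x y) :=
    ct.range_geodesicPath x y ▸ isCompact_range (ct.geodesicPath x y).continuous
  exact h_compact.exists_isMinOn ⟨x, ct.left_mem_seg x y⟩
    (continuous_const.dist continuous_id).continuousOn

variable {ct} in
theorem mem_seg_or_mem_seg (hz : z ∈ ct.seg x y) (σ : T) :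
    z ∈ ct.seg σ x ∨ z ∈ ct.seg σ y := by
  obtain ⟨p, hp, hp_nearest⟩ := ct.exists_nearest_mem_seg x y σ
  have h_seg := ct.seg_union_seg_of_dist_add_dist (ct.mem_seg_iff.mp hp)
  have seg_subset {w : T} (hw : ct.seg p w ⊆ ct.seg x y) : ct.seg p w ⊆ ct.seg σ w := by
    rw [← ct.seg_union_seg_of_inter_subset (p := p)
      (ct.seg_inter_subset_singleton_of_nearest fun q hq => hp_nearest q (hw hq))]
    exact Set.subset_union_right
  rw [← h_seg] at hz seg_subset
  rcases hz with hz | hz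
  · rw [ct.seg_comm x p] at hz seg_subset
    exact .inl (seg_subset Set.subset_union_left hz)
  · exact .inr (seg_subset Set.subset_union_right hz)

theorem mem_seg_of_notMem_connectedComponentIn (hσ : σ ∉ connectedComponentIn {x}ᶜ y) :
    x ∈ ct.seg σ y := by
  by_contra hx
  have h_conn : IsPreconnected (ct.seg σ y) :=
    ct.range_geodesicPath σ y ▸ isPreconnected_range (ct.geodesicPath σ y).continuous
  exact hσ (h_conn.subset_connectedComponentIn (ct.right_mem_seg σ y)
    (Set.subset_compl_singleton_iff.mpr hx) (ct.left_mem_seg σ y))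

variable {ct} {δ ε s : ℝ}

theorem dist_le_dist_of_mem_ball_diff_ball (hz : z ∈ ct.seg x y) (hε : dist x z ≤ ε)
    (hδ : δ ≤ dist x z + ε) (hσ : σ ∈ Metric.ball x δ \ Metric.ball z ε) :
    dist x y ≤ dist σ y := by
  obtain ⟨hσx, hσz⟩ := hσ
  rw [Metric.mem_ball] at hσx hσz
  rcases mem_seg_or_mem_seg hz σ with h | h
  · linarith [dist_add_dist_of_mem_seg h, dist_comm x z]
  · linarith [dist_add_dist_of_mem_seg h, dist_add_dist_of_mem_seg hz]

theorem add_le_dist_of_mem_offspringPart_diff (ct : ContinuumTree T)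
    (hσ : σ ∈ offspringPart δ x y \ offspringPart s x y) : dist x y + s ≤ dist σ y := by
  obtain ⟨⟨-, hσ_comp⟩, hσs⟩ := hσ
  have hsσ : s ≤ dist σ x := not_lt.mp fun h => hσs ⟨h, hσ_comp⟩
  linarith [dist_add_dist_of_mem_seg (ct.mem_seg_of_notMem_connectedComponentIn hσ_comp)]

theorem offspringPart_diff_subset (hz : z ∈ ct.seg x y) (hs : ε ≤ dist x z + s) :
    offspringPart δ x y \ offspringPart s x y ⊆ Metric.ball x δ \ Metric.ball z ε := by
  intro σ hσ
  refine ⟨hσ.1.1, fun hσz => ?_⟩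
  rw [Metric.mem_ball] at hσz
  linarith [ct.add_le_dist_of_mem_offspringPart_diff hσ, dist_triangle σ z y,
    dist_add_dist_of_mem_seg hz]

end ContinuumTree

section Integrals

open MeasureTheory

theorem measureReal_mul_add_le_setIntegral {α : Type*} [MeasurableSpace α] {μ : Measure α}
    {f : α → ℝ} {A B : Set α} {c s : ℝ} (hA : MeasurableSet A) (hμA : μ A ≠ ⊤)
    (hf : IntegrableOn f A μ) (hBA : B ⊆ A) (hs : 0 ≤ s) (hfA : ∀ a ∈ A, c ≤ f a)
    (hfB : ∀ b ∈ B, c + s ≤ f b) :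
    μ.real A * c + s * μ.real B ≤ ∫ a in A, f a ∂μ := by
  have : Fact (μ A < ⊤) := ⟨hμA.lt_top⟩
  have markov : s * (μ.restrict A).real {a | s ≤ f a - c} ≤ ∫ a in A, (f a - c) ∂μ :=
    mul_meas_ge_le_integral_of_nonneg
      (ae_restrict_of_forall_mem hA fun a ha => sub_nonneg.mpr (hfA a ha))
      (hf.sub (integrable_const c)) s
  have measure_le : μ.real B ≤ (μ.restrict A).real {a | s ≤ f a - c} := by
    rw [measureReal_def, ← Measure.restrict_eq_self μ hBA]
    exact measureReal_mono fun b hb => le_sub_iff_add_le'.mpr (hfB b hb)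
  have integral_sub_const : ∫ a in A, (f a - c) ∂μ = ∫ a in A, f a ∂μ - μ.real A * c := by
    rw [integral_sub hf (integrable_const c), setIntegral_const, smul_eq_mul]
  linarith [mul_le_mul_of_nonneg_left measure_le hs]

theorem integrableOn_dist_ball {X : Type*} [PseudoMetricSpace X] [MeasurableSpace X]
    [OpensMeasurableSpace X] {μ : Measure X} {x : X} {r : ℝ}
    (hμ : μ (Metric.ball x r) ≠ ⊤) (y : X) :
    IntegrableOn (fun σ => dist σ y) (Metric.ball x r) μ := by
  refine .of_bound hμ.lt_top (Continuous.aestronglyMeasurable (by fun_prop)) (r + dist x y)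
    (ae_restrict_of_forall_mem measurableSet_ball fun σ hσ => ?_)
  rw [Real.norm_of_nonneg dist_nonneg]
  linarith [dist_triangle σ x y, Metric.mem_ball.mp hσ]

theorem stmt_12_general {T : Type*} [MetricSpace T] [CompactSpace T]
    [MeasurableSpace T] [OpensMeasurableSpace T] (ct : ContinuumTree T) (lam : Measure T)
    {x y z : T} (hz : z ∈ ct.seg x y) {δ ε s : ℝ} (hε : dist x z ≤ ε) (hδ : δ = dist x z + ε)
    (hs : ε ≤ dist x z + s) (hlam : lam (Metric.ball x δ) ≠ ⊤) :
    lam.real (Metric.ball x δ \ Metric.ball z ε) * dist x y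
        + s * lam.real (offspringPart δ x y \ offspringPart s x y)
        + ∫ σ in Metric.ball z ε, dist σ y ∂lam
      ≤ ∫ σ in Metric.ball x δ, dist σ y ∂lam := by
  have h_ball : Metric.ball z ε ⊆ Metric.ball x δ :=
    Metric.ball_subset_ball' (by rw [hδ, dist_comm, add_comm])
  have h_int := integrableOn_dist_ball hlam y
  have h_outer := measureReal_mul_add_le_setIntegral (measurableSet_ball.diff measurableSet_ball)
    (measure_ne_top_of_subset Set.sdiff_subset hlam) (h_int.mono_set Set.sdiff_subset)
    (ContinuumTree.offspringPart_diff_subset hz hs) (by linarith)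
    (fun σ hσ => ContinuumTree.dist_le_dist_of_mem_ball_diff_ball hz hε hδ.le hσ)
    (fun σ hσ => ct.add_le_dist_of_mem_offspringPart_diff hσ)
  linarith [setIntegral_sdiff measurableSet_ball h_int h_ball]

end Integrals

open MeasureTheory in
/-- The recursive lower bound for `∫_{B_δ(x)} ρ(σ,y) dλ(σ)` in a continuum tree. -/
theorem stmt_12 {T : Type*} [MetricSpace T] [CompactSpace T]
    [MeasurableSpace T] [BorelSpace T] (ct : ContinuumTree T)
    (lam : Measure T) [IsFiniteMeasure lam]
    {x y : T} (hxy : x ≠ y) {δ : ℝ} (hδ0 : 0 < δ) (hδℓ : δ < dist x y)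
    {z : T} (hz : z ∈ ct.seg x y) (hzd : dist x z = δ / 2) :
    (lam (Metric.ball x δ \ Metric.ball z (δ / 2))).toReal * dist x y
        + (δ / 2) * (lam (offspringPart δ x y \ offspringPart (δ / 2) x y)).toReal
        + ∫ σ in Metric.ball z (δ / 2), dist σ y ∂lam
      ≤ ∫ σ in Metric.ball x δ, dist σ y ∂lam :=
  stmt_12_general ct lam hz hzd.le (by linarith) (by linarith) (measure_ne_top _ _)
end

section
/- Define α : ℝ → ℝ by α(δ) = 1 − exp(−2δ²), and define f : ℝ → ℝ by f(δ) = 1/4 − (α(δ/2) + 9·α(δ/4))/(8·α(δ)) for δ ≠ 0 and f(0) = 19/128. Then f is differentiable at 0 with derivative f'(0) = 0. -/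
/-- `α(δ) = 1 - exp(-2δ²)`, the expected volume of a ball of radius `δ` in the BCRT. -/
noncomputable def alphaFn (δ : ℝ) : ℝ := 1 - Real.exp (-2 * δ ^ 2)

/-- `f(δ) = 1/4 - (α(δ/2) + 9 α(δ/4)) / (8 α(δ))` (for `δ ≠ 0`). -/
noncomputable def fFn (δ : ℝ) : ℝ :=
  1 / 4 - (alphaFn (δ / 2) + 9 * alphaFn (δ / 4)) / (8 * alphaFn δ)

/-!
Put `y = exp (-2 (δ / 4) ^ 2) = 1 - α(δ/4)`. Then `α(δ/2) = 1 - y ^ 4` and `α(δ) = 1 - y ^ 16`, so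
the factor `1 - y` cancels from the quotient defining `f`. What remains is a rational function of
`y` that is regular at `y = 1`, and `y` has derivative `0` at `δ = 0`.
-/

open Finset

lemma alphaFn_eq_zero_iff {t : ℝ} : alphaFn t = 0 ↔ t = 0 := by
  rw [alphaFn, sub_eq_zero, eq_comm, Real.exp_eq_one_iff]
  simp

lemma alphaFn_zero : alphaFn 0 = 0 := alphaFn_eq_zero_iff.mpr rfl

lemma hasDerivAt_alphaFn (t : ℝ) : HasDerivAt alphaFn (4 * t * Real.exp (-2 * t ^ 2)) t := by
  have hasDerivAt_exponent : HasDerivAt (fun s : ℝ => -2 * s ^ 2) (-2 * (2 * t)) t := by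
    simpa using (hasDerivAt_pow 2 t).const_mul (-2)
  exact (hasDerivAt_exponent.exp.const_sub 1).congr_deriv (by ring)

lemma one_sub_alphaFn_natCast_mul (k : ℕ) (t : ℝ) :
    1 - alphaFn (k * t) = (1 - alphaFn t) ^ k ^ 2 := by
  simp only [alphaFn, sub_sub_cancel, ← Real.exp_nat_mul]
  congr 1
  push_cast
  ring

lemma alphaFn_natCast_mul (k : ℕ) (t : ℝ) :
    alphaFn (k * t) = alphaFn t * ∑ i ∈ range (k ^ 2), (1 - alphaFn t) ^ i := by
  have geom_sum := mul_neg_geom_sum (1 - alphaFn t) (k ^ 2)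
  rwa [← one_sub_alphaFn_natCast_mul, sub_sub_cancel, sub_sub_cancel, eq_comm] at geom_sum

/-- The function `f` in the variable `y = 1 - α(δ/4)`, after the common factor `1 - y` has been
cancelled; its value at `y = 1` is the one that extends `f` to `δ = 0`. -/
noncomputable def fRational (y : ℝ) : ℝ :=
  1 / 4 - (∑ i ∈ range 4, y ^ i + 9) / (8 * ∑ i ∈ range 16, y ^ i)

lemma fRational_one : fRational 1 = 19 / 128 := by
  norm_num [fRational]

lemma differentiableAt_fRational {y : ℝ} (hy : y ≠ -1) : DifferentiableAt ℝ fRational y := by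
  have denominator_ne_zero : 8 * ∑ i ∈ range 16, y ^ i ≠ 0 :=
    mul_ne_zero (by norm_num) (geom_sum_ne_zero hy (by norm_num))
  unfold fRational
  fun_prop (disch := exact denominator_ne_zero)

lemma fFn_eq_fRational {δ : ℝ} (hδ : δ ≠ 0) : fFn δ = fRational (1 - alphaFn (δ / 4)) := by
  have alphaFn_quarter_ne_zero : alphaFn (δ / 4) ≠ 0 :=
    alphaFn_eq_zero_iff.not.mpr (div_ne_zero hδ four_ne_zero)
  have alphaFn_half :
      alphaFn (δ / 2) = alphaFn (δ / 4) * ∑ i ∈ range 4, (1 - alphaFn (δ / 4)) ^ i := by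
    rw [show δ / 2 = (2 : ℕ) * (δ / 4) by push_cast; ring, alphaFn_natCast_mul]
    norm_num
  have alphaFn_whole :
      alphaFn δ = alphaFn (δ / 4) * ∑ i ∈ range 16, (1 - alphaFn (δ / 4)) ^ i := by
    simpa [mul_div_cancel₀] using alphaFn_natCast_mul 4 (δ / 4)
  rw [fFn, fRational, alphaFn_half, alphaFn_whole, mul_comm 9, ← mul_add, mul_left_comm 8,
    mul_div_mul_left _ _ alphaFn_quarter_ne_zero]

lemma ite_fFn_eq_fRational (δ : ℝ) :
    (if δ = 0 then 19 / 128 else fFn δ) = fRational (1 - alphaFn (δ / 4)) := by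
  split_ifs with hδ
  · rw [hδ, zero_div, alphaFn_zero, sub_zero, fRational_one]
  · exact fFn_eq_fRational hδ

lemma hasDerivAt_one_sub_alphaFn_div_zero (c : ℝ) :
    HasDerivAt (fun δ => 1 - alphaFn (δ / c)) 0 0 := by
  have hasDerivAt_comp := (hasDerivAt_alphaFn (0 / c)).comp 0 ((hasDerivAt_id (0 : ℝ)).div_const c)
  exact (hasDerivAt_comp.const_sub 1).congr_deriv (by simp)

/-- The function `f`, extended by `f(0) = 19/128`, is differentiable at `0` with
derivative `0`. -/
theorem stmt_16 :
    HasDerivAt (fun δ : ℝ => if δ = 0 then 19 / 128 else fFn δ) 0 0 := by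
  have differentiableAt_outer : DifferentiableAt ℝ fRational (1 - alphaFn (0 / 4)) :=
    differentiableAt_fRational (by norm_num [alphaFn_zero])
  simp_rw [ite_fFn_eq_fRational]
  exact (differentiableAt_outer.hasDerivAt.comp 0
    (hasDerivAt_one_sub_alphaFn_div_zero 4)).congr_deriv (mul_zero _)
end

section
/- Define α : ℝ → ℝ by α(δ) = 1 − exp(−2δ²), and define f : ℝ → ℝ by f(δ) = 1/4 − (α(δ/2) + 9·α(δ/4))/(8·α(δ)) for δ ≠ 0 and f(0) = 19/128. Then 0 is a strict local maximum of f: there exists a > 0 such that f(δ) < 19/128 for all δ with 0 < |δ| < a. -/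
/-!
As a function of `δ²`, `α` is strictly concave and vanishes at `0`, so `α(cδ) > c² α(δ)` for
`0 < |c| < 1`. Hence `α(δ/2) + 9 α(δ/4)` exceeds `(1/4 + 9/16) α(δ)`, and
`1/4 - (1/4 + 9/16) / 8 = 19/128`.
-/

theorem exp_mul_lt_mul_exp_add_one_sub {t x : ℝ} (ht₀ : 0 < t) (ht₁ : t < 1) (hx : x ≠ 0) :
    Real.exp (t * x) < t * Real.exp x + (1 - t) := by
  simpa using strictConvexOn_exp.2 (Set.mem_univ x) (Set.mem_univ 0) hx ht₀ (sub_pos.2 ht₁)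
    (add_sub_cancel t 1)

theorem alphaFn_pos {δ : ℝ} (hδ : δ ≠ 0) : 0 < alphaFn δ := by
  have hneg : -2 * δ ^ 2 < 0 := by
    linarith [sq_pos_of_ne_zero hδ]
  exact sub_pos.2 (Real.exp_lt_one_iff.2 hneg)

theorem sq_mul_alphaFn_lt {c δ : ℝ} (hc₀ : c ≠ 0) (hc₁ : |c| < 1) (hδ : δ ≠ 0) :
    c ^ 2 * alphaFn δ < alphaFn (c * δ) := by
  have hexp : Real.exp (c ^ 2 * (-2 * δ ^ 2)) < c ^ 2 * Real.exp (-2 * δ ^ 2) + (1 - c ^ 2) :=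
    exp_mul_lt_mul_exp_add_one_sub (sq_pos_of_ne_zero hc₀) ((sq_lt_one_iff_abs_lt_one c).2 hc₁)
      (mul_ne_zero (by norm_num) (pow_ne_zero 2 hδ))
  have harg : -2 * (c * δ) ^ 2 = c ^ 2 * (-2 * δ ^ 2) := by ring
  rw [alphaFn, alphaFn, harg]
  linarith

theorem stmt_17_general {δ : ℝ} (hδ : δ ≠ 0) : fFn δ < 19 / 128 := by
  have hhalf : (1 / 2) ^ 2 * alphaFn δ < alphaFn (δ / 2) := by
    simpa only [one_div_mul_eq_div] using
      sq_mul_alphaFn_lt (c := 1 / 2) (by norm_num) (by norm_num [abs_lt]) hδ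
  have hquarter : (1 / 4) ^ 2 * alphaFn δ < alphaFn (δ / 4) := by
    simpa only [one_div_mul_eq_div] using
      sq_mul_alphaFn_lt (c := 1 / 4) (by norm_num) (by norm_num [abs_lt]) hδ
  have hratio : 13 / 128 < (alphaFn (δ / 2) + 9 * alphaFn (δ / 4)) / (8 * alphaFn δ) := by
    rw [lt_div_iff₀ (mul_pos (by norm_num) (alphaFn_pos hδ))]
    linarith
  rw [fFn]
  linarith

/-- `0` is a strict local maximum of `f` (extended by `f(0) = 19/128`): there is `a > 0`
with `f(δ) < 19/128` whenever `0 < |δ| < a`. -/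
theorem stmt_17 :
    ∃ a > (0 : ℝ), ∀ δ : ℝ, 0 < |δ| → |δ| < a → fFn δ < 19 / 128 :=
  ⟨1, one_pos, fun _ hδ _ => stmt_17_general (abs_pos.1 hδ)⟩
end
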